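/- The subgroup of the group of bijections of ℝ⁵ generated by the three maps s, t, i is isomorphic to the symmetric group on five letters S₅; in particular it has exactly 120 elements. -/

import Mathlib

noncomputable section

/-- Quintuplets `(z₁, z₂, z₃, z₄, z₀)` of real numbers. -/
abbrev R5 : Type := ℝ × ℝ × ℝ × ℝ × ℝ

/-- The bijection `s(z₁,z₂,z₃,z₄,z₀) = (z₀,z₄,z₃,z₂,z₁)`. -/
def sPerm : Equiv.Perm R5 where
  toFun z := (z.2.2.2.2, z.2.2.2.1, z.2.2.1, z.2.1, z.1)
  invFun z := (z.2.2.2.2, z.2.2.2.1, z.2.2.1, z.2.1, z.1)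
  left_inv z := rfl
  right_inv z := rfl

/-- The bijection `t(z₁,z₂,z₃,z₄,z₀) = (z₂,−z₃−1,−z₁−1,z₄,z₀)`. -/
def tPerm : Equiv.Perm R5 where
  toFun z := (z.2.1, -z.2.2.1 - 1, -z.1 - 1, z.2.2.2.1, z.2.2.2.2)
  invFun z := (-z.2.2.1 - 1, z.1, -z.2.1 - 1, z.2.2.2.1, z.2.2.2.2)
  left_inv z := by
    obtain ⟨a, b, c, d, e⟩ := z
    simp only [Prod.mk.injEq, and_true, true_and]
    constructor <;> ring
  right_inv z := by
    obtain ⟨a, b, c, d, e⟩ := z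
    simp only [Prod.mk.injEq, and_true, true_and]
    constructor <;> ring

/-- The bijection `i(z₁,z₂,z₃,z₄,z₀) = (z₁,z₂,z₃,z₀,z₄)`. -/
def iPerm : Equiv.Perm R5 where
  toFun z := (z.1, z.2.1, z.2.2.1, z.2.2.2.2, z.2.2.2.1)
  invFun z := (z.1, z.2.1, z.2.2.1, z.2.2.2.2, z.2.2.2.1)
  left_inv z := rfl
  right_inv z := rfl

/-- Affine coordinates in which `s`, `t`, `i` become coordinate permutations. -/
def coordEquiv : R5 ≃ (Fin 5 → ℝ) where
  toFun z := ![z.1 + 1/2, z.2.1 + 1/2, -(z.2.2.1 + 1/2), z.2.2.2.1 + 1/2, z.2.2.2.2 + 1/2]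
  invFun v := (v 0 - 1/2, v 1 - 1/2, -v 2 - 1/2, v 3 - 1/2, v 4 - 1/2)
  left_inv z := by
    obtain ⟨a, b, c, d, e⟩ := z
    simp
  right_inv v := by
    funext j
    fin_cases j <;> simp

/-- The action of `S₅` on `ℝ⁵` in these coordinates. -/
def permHom : Equiv.Perm (Fin 5) →* Equiv.Perm R5 where
  toFun σ := (coordEquiv.trans (Equiv.arrowCongr σ (Equiv.refl ℝ))).trans coordEquiv.symm
  map_one' := by
    ext1 z
    simp [Equiv.arrowCongr, Equiv.Perm.one_def]
  map_mul' σ τ := by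
    ext1 z
    simp [Equiv.arrowCongr, Equiv.Perm.mul_def, Function.comp_assoc]

theorem permHom_injective : Function.Injective permHom := by
  intro σ τ h
  have key : ∀ v : Fin 5 → ℝ, v ∘ σ.symm = v ∘ τ.symm := by
    intro v
    have := congrArg (fun g : Equiv.Perm R5 => coordEquiv (g (coordEquiv.symm v))) h
    simpa [permHom, Equiv.arrowCongr] using this
  have h2 : σ.symm = τ.symm := by
    ext j
    have := congrFun (key (fun k => ((k : ℕ) : ℝ))) j
    simpa using this
  exact Equiv.symm_bijective.injective h2

/-- Permutation corresponding to `s`. -/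
def sigS : Equiv.Perm (Fin 5) := Equiv.swap 0 4 * Equiv.swap 1 3
/-- Permutation corresponding to `t`. -/
def sigT : Equiv.Perm (Fin 5) := Equiv.swap 0 2 * Equiv.swap 2 1
/-- Permutation corresponding to `i`. -/
def sigI : Equiv.Perm (Fin 5) := Equiv.swap 3 4

theorem permHom_aux (σ : Equiv.Perm (Fin 5)) (g : Equiv.Perm R5)
    (h : ∀ z j, coordEquiv (g z) j = coordEquiv z (σ.symm j)) : permHom σ = g := by
  ext1 z
  apply coordEquiv.injective
  funext j
  rw [h]
  simp [permHom, Equiv.arrowCongr]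

theorem permHom_s : permHom sigS = sPerm := by
  apply permHom_aux
  intro z j
  have h : ∀ j, sigS.symm j = ![4, 3, 2, 1, 0] j := by decide
  rw [h]
  fin_cases j <;> simp [coordEquiv, sPerm]

theorem permHom_t : permHom sigT = tPerm := by
  apply permHom_aux
  intro z j
  have h : ∀ j, sigT.symm j = ![1, 2, 0, 3, 4] j := by decide
  rw [h]
  fin_cases j <;> simp [coordEquiv, tPerm] <;> ring

theorem permHom_i : permHom sigI = iPerm := by
  apply permHom_aux
  intro z j
  have h : ∀ j, sigI.symm j = ![0, 1, 2, 4, 3] j := by decide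
  rw [h]
  fin_cases j <;> simp [coordEquiv, iPerm]

theorem closure_sig : Subgroup.closure {sigS, sigT, sigI} = (⊤ : Subgroup (Equiv.Perm (Fin 5))) := by
  have hc : (sigT * sigS).IsCycle := by
    refine ⟨0, by decide, fun y _ => ?_⟩
    have : ∀ y : Fin 5, ∃ n : Fin 5, ((sigT * sigS) ^ (n : ℕ)) 0 = y := by decide
    obtain ⟨n, hn⟩ := this y
    exact ⟨((n : ℕ) : ℤ), by rw [zpow_natCast]; exact hn⟩
  have hs : (sigT * sigS).support = Finset.univ := by decide
  have hw : sigI.IsSwap := ⟨3, 4, by decide, rfl⟩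
  have h5 : (Fintype.card (Fin 5)).Prime := by rw [Fintype.card_fin]; norm_num
  have h := Equiv.Perm.closure_prime_cycle_swap h5 hc hs hw
  rw [eq_top_iff, ← h, Subgroup.closure_le]
  rintro x (rfl | rfl)
  · exact mul_mem (Subgroup.subset_closure (by simp)) (Subgroup.subset_closure (by simp))
  · exact Subgroup.subset_closure (by simp)

theorem closure_eq_range :
    (Subgroup.closure {sPerm, tPerm, iPerm} : Subgroup (Equiv.Perm R5)) = permHom.range := by
  rw [MonoidHom.range_eq_map, ← closure_sig, MonoidHom.map_closure, Set.image_insert_eq,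
    Set.image_insert_eq, Set.image_singleton, permHom_s, permHom_t, permHom_i]

theorem stmt1 :
    Nonempty ((Subgroup.closure {sPerm, tPerm, iPerm} : Subgroup (Equiv.Perm R5)) ≃*
      Equiv.Perm (Fin 5)) ∧
    Nat.card (Subgroup.closure {sPerm, tPerm, iPerm} : Subgroup (Equiv.Perm R5)) = 120 := by
  rw [closure_eq_range]
  have e := (MonoidHom.ofInjective permHom_injective).symm
  refine ⟨⟨e⟩, ?_⟩
  rw [Nat.card_congr e.toEquiv, Nat.card_eq_fintype_card, Fintype.card_perm, Fintype.card_fin]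
  rfl
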